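/- Let A = (a_{ij}) be a 2×2 integer matrix with det A = 1, let λ > 1 and let a be an irrational real number. If f : ℝ³ → ℝ is smooth, Γ₃-invariant, and satisfies f ∘ γ = f, then f depends only on the third coordinate: f(x,y,t) = f(x',y',t) for all x, x', y, y', t ∈ ℝ. -/

import Mathlib

/-- The flow `φ_s(x,y,t) = (x + s·λᵗ, y + a·s·λᵗ, t)` on `ℝ³`. -/
noncomputable def phi (lam a : ℝ) (s : ℝ) (p : ℝ × ℝ × ℝ) : ℝ × ℝ × ℝ :=
  (p.1 + s * lam ^ p.2.2, p.2.1 + a * s * lam ^ p.2.2, p.2.2)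

/-!
Fix `t` and write `c = lam ^ t`. The slice `f (·, ·, t)` has the periods `(1, 0)`, `(0, 1)` and
`(c, a * c)`, and by continuity its periods form a closed group.

If `c` is rational and nonzero, clearing its denominator produces a period `(0, a * n)` with
`n ≠ 0`; together with `(0, 1)` it generates a dense subgroup of the vertical line, so the slice
does not depend on `y`. Such `t` are dense because `t ↦ lam ^ t` is an open map, so no slice depends
on `y`, and `(c, 0)` is a period for every `t`. If now `c` is irrational, the slice does not depend
on `x` either, and such `t` are again dense.
-/

open Function

section Periods

variable {E Y : Type*} [AddGroup E]

/-- The group of all periods of `g`, used to replace two given periods by the whole closed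
subgroup they generate. -/
def periodSubgroup (g : E → Y) : AddSubgroup E where
  carrier := {w | Periodic g w}
  zero_mem' := periodic_with_period_zero g
  add_mem' := Periodic.add_period
  neg_mem' := Periodic.neg

theorem mem_periodSubgroup {g : E → Y} {w : E} : w ∈ periodSubgroup g ↔ Periodic g w :=
  Iff.rfl

theorem isClosed_periodSubgroup [TopologicalSpace E] [ContinuousAdd E] [TopologicalSpace Y]
    [T2Space Y] {g : E → Y} (hg : Continuous g) : IsClosed (periodSubgroup g : Set E) := by
  have h_inter : (periodSubgroup g : Set E) = ⋂ z, {w | g (z + w) = g z} := by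
    ext w
    simp only [SetLike.mem_coe, mem_periodSubgroup, Periodic, Set.mem_iInter, Set.mem_ofPred_eq]
  rw [h_inter]
  exact isClosed_iInter fun z ↦ isClosed_eq (by fun_prop) continuous_const

end Periods

section Directions

variable {E Y : Type*} [AddCommGroup E] [Module ℝ E] [TopologicalSpace E] [ContinuousAdd E]
  [ContinuousSMul ℝ E] [TopologicalSpace Y] [T2Space Y] {g : E → Y} {u v : E} {a c : ℝ}

theorem periodic_smul_of_irrational (hg : Continuous g) (ha : Irrational a) (hv : Periodic g v)
    (hav : Periodic g (a • v)) (s : ℝ) : Periodic g (s • v) := by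
  let P : AddSubgroup ℝ := (periodSubgroup g).comap ((smulAddHom ℝ E).flip v)
  have hP_closed : IsClosed (P : Set ℝ) :=
    (isClosed_periodSubgroup hg).preimage (continuous_id.smul continuous_const)
  have hP_pair : ({a, 1} : Set ℝ) ⊆ P := by
    rintro r (rfl | rfl)
    · exact hav
    · change Periodic g ((1 : ℝ) • v)
      rwa [one_smul]
  have h_closure : Dense (AddSubgroup.closure {a, 1} : Set ℝ) :=
    dense_addSubgroupClosure_pair_iff.2 (by rwa [div_one])
  have hP_dense : Dense (P : Set ℝ) := h_closure.mono ((AddSubgroup.closure_le P).2 hP_pair)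
  exact hP_closed.closure_subset (hP_dense s)

theorem periodic_smul_right_of_rat (hg : Continuous g) (ha : Irrational a) (hu : Periodic g u)
    (hv : Periodic g v) {q : ℚ} (hq : q ≠ 0) (hw : Periodic g ((q : ℝ) • (u + a • v))) (s : ℝ) :
    Periodic g (s • v) := by
  have h_den : (q.den : ℝ) * q = q.num := mod_cast Rat.den_mul_eq_num q
  have h_period : q.den • ((q : ℝ) • (u + a • v)) - q.num • u = (a * q.num) • v := by
    rw [← Nat.cast_smul_eq_nsmul ℝ, smul_smul, h_den, ← Int.cast_smul_eq_zsmul ℝ]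
    module
  refine periodic_smul_of_irrational hg (ha.mul_intCast (Rat.num_ne_zero.2 hq)) hv ?_ s
  exact h_period ▸ (hw.nsmul q.den).sub_period (hu.zsmul q.num)

theorem periodic_smul_left_of_irrational (hg : Continuous g) (hc : Irrational c)
    (hu : Periodic g u) (hv : ∀ s : ℝ, Periodic g (s • v))
    (hw : Periodic g (c • (u + a • v))) (s : ℝ) : Periodic g (s • u) := by
  have h_period : c • (u + a • v) - (c * a) • v = c • u := by module
  exact periodic_smul_of_irrational hg hc hu (h_period ▸ hw.sub_period (hv (c * a))) s

end Directions

theorem periodic_of_dense {T E Y : Type*} [TopologicalSpace T] [Add E] [TopologicalSpace Y]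
    [T2Space Y] {g : T → E → Y} (hg : ∀ z, Continuous fun t ↦ g t z) {D : Set T} (hD : Dense D)
    {w : E} (h : ∀ t ∈ D, Periodic (g t) w) (t : T) : Periodic (g t) w :=
  fun z ↦ congrFun (Continuous.ext_on hD (hg (z + w)) (hg z) fun t ht ↦ h t ht z) t

theorem isOpenMap_const_rpow {b : ℝ} (hb : 0 < b) (hb' : b ≠ 1) :
    IsOpenMap fun t : ℝ ↦ b ^ t := by
  have h_log : Real.log b ≠ 0 := Real.log_ne_zero_of_pos_of_ne_one hb hb'
  simp only [Real.rpow_def_of_pos hb]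
  exact Real.isOpenEmbedding_exp.isOpenMap.comp (Homeomorph.mulLeft₀ _ h_log).isOpenMap

theorem stmt9_general {T Y : Type*} [TopologicalSpace T] [TopologicalSpace Y] [T2Space Y]
    {c : T → ℝ} (hc : IsOpenMap c) {a : ℝ} (ha : Irrational a)
    {f : ℝ × ℝ × T → Y} (hf : Continuous f)
    (hper₁ : ∀ x y t, f (x + 1, y, t) = f (x, y, t))
    (hper₂ : ∀ x y t, f (x, y + 1, t) = f (x, y, t))
    (hinv : ∀ x y t, f (x + c t, y + a * c t, t) = f (x, y, t)) (x x' y y' : ℝ) (t : T) :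
    f (x, y, t) = f (x', y', t) := by
  let g : T → ℝ × ℝ → Y := fun t z ↦ f (z.1, z.2, t)
  let u : ℝ × ℝ := (1, 0)
  let v : ℝ × ℝ := (0, 1)
  have hg (t : T) : Continuous (g t) := by fun_prop
  have hg' (z : ℝ × ℝ) : Continuous fun t ↦ g t z := by fun_prop
  have hu (t : T) : Periodic (g t) u := fun z ↦ by simpa [g, u] using hper₁ z.1 z.2 t
  have hv (t : T) : Periodic (g t) v := fun z ↦ by simpa [g, v] using hper₂ z.1 z.2 t
  have hw (t : T) : Periodic (g t) (c t • (u + a • v)) := fun z ↦ by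
    simpa [g, u, v, mul_comm] using hinv z.1 z.2 t
  have hv_all (t : T) (s : ℝ) : Periodic (g t) (s • v) := by
    have h_rat : Dense (c ⁻¹' (Set.range ((↑) : ℚ → ℝ) \ {0})) :=
      (Dense.sdiff_singleton Rat.denseRange_cast 0).preimage hc
    refine periodic_of_dense hg' h_rat (fun t ⟨⟨q, hq⟩, ht⟩ ↦ ?_) t
    have hq₀ : q ≠ 0 := by rintro rfl; exact ht (by simpa using hq.symm)
    exact periodic_smul_right_of_rat (hg t) ha (hu t) (hv t) hq₀ (hq ▸ hw t) s
  have hu_all (t : T) (s : ℝ) : Periodic (g t) (s • u) :=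
    periodic_of_dense hg' (dense_irrational.preimage hc)
      (fun t ht ↦ periodic_smul_left_of_irrational (hg t) ht (hu t) (hv_all t) (hw t) s) t
  have h_shift := (hu_all t (x - x')).add_period (hv_all t (y - y')) (x', y')
  simpa [g, u, v] using h_shift

/-- Let `A` be a `2×2` integer matrix with `det A = 1`, let `λ > 1` and
let `a` be irrational. If `f : ℝ³ → ℝ` is smooth, `Γ₃`-invariant, and satisfies
`f ∘ γ = f` with `γ = φ₁`, then `f` depends only on the third coordinate. -/
theorem stmt9 (A : Matrix (Fin 2) (Fin 2) ℤ) (hdet : A.det = 1)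
    (lam a : ℝ) (hlam : 1 < lam) (ha : Irrational a)
    (f : ℝ × ℝ × ℝ → ℝ) (hf : ContDiff ℝ (⊤ : ℕ∞) f)
    (hper₁ : ∀ x y t : ℝ, f (x + 1, y, t) = f (x, y, t))
    (hper₂ : ∀ x y t : ℝ, f (x, y + 1, t) = f (x, y, t))
    (hA : ∀ x y t : ℝ,
      f ((A 0 0 : ℝ) * x + (A 0 1 : ℝ) * y, (A 1 0 : ℝ) * x + (A 1 1 : ℝ) * y, t + 1)
        = f (x, y, t))
    (hinv : f ∘ phi lam a 1 = f) :
    ∀ x x' y y' t : ℝ, f (x, y, t) = f (x', y', t) :=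
  stmt9_general (isOpenMap_const_rpow (by linarith) hlam.ne') ha hf.continuous hper₁ hper₂
    fun x y t ↦ by simpa [phi] using congrFun hinv (x, y, t)
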